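/- The mediation formula identifies the natural (pure) direct effect: under consistency, positivity, and the cross-world exchangeability assumptions, one has E[Y^{1,M^0}] − E[Y^{0,M^0}] = Ψ(P), where Y^{a,M^0} := Σ_m 1{M^0=m} · Y^{a,m} and Ψ(P) is the mediation formula. -/

import Mathlib

open Classical

noncomputable section

/-- Probability of the event `S` under the probability mass function `P`
on a finite sample space. -/
def pr {Ω : Type} [Fintype Ω] (P : Ω → ℝ) (S : Ω → Prop) : ℝ :=
  ∑ ω, if S ω then P ω else 0

/-- Conditional probability of `S` given `T`, with the convention that it is `0`
when the conditioning event is null (in Lean, `x / 0 = 0`). -/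
def cpr {Ω : Type} [Fintype Ω] (P : Ω → ℝ) (S T : Ω → Prop) : ℝ :=
  pr P (fun ω => S ω ∧ T ω) / pr P T

/-- Expectation of `X` under `P`. -/
def expec {Ω : Type} [Fintype Ω] (P : Ω → ℝ) (X : Ω → ℝ) : ℝ :=
  ∑ ω, X ω * P ω

/-- Conditional expectation of `X` given the event `T`, with the convention that
it is `0` when the conditioning event is null. -/
def cexp {Ω : Type} [Fintype Ω] (P : Ω → ℝ) (X : Ω → ℝ) (T : Ω → Prop) : ℝ :=
  (∑ ω, if T ω then X ω * P ω else 0) / pr P T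

/-- The mediation formula
`Ψ(P) = Σ_m Σ_l ( E[Y|M=m,A=1,L=l] − E[Y|M=m,A=0,L=l] ) · P(M=m|A=0,L=l) · P(L=l)`. -/
def medForm {Ω Lt Mt : Type} [Fintype Ω] [Fintype Lt] [Fintype Mt]
    (P : Ω → ℝ) (Lv : Ω → Lt) (A : Ω → Fin 2) (M : Ω → Mt) (Y : Ω → ℝ) : ℝ :=
  ∑ m, ∑ l,
    (cexp P Y (fun ω => M ω = m ∧ A ω = 1 ∧ Lv ω = l)
      - cexp P Y (fun ω => M ω = m ∧ A ω = 0 ∧ Lv ω = l))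
    * cpr P (fun ω => M ω = m) (fun ω => A ω = 0 ∧ Lv ω = l)
    * pr P (fun ω => Lv ω = l)

/-- The natural (cross-world) mediation counterfactual
`Y^{a,M^0} := Σ_m 1{M^0=m} · Y^{a,m}`. -/
def natCf {Ω Mt : Type} [Fintype Mt]
    (Mc : Fin 2 → Ω → Mt) (Yc : Fin 2 → Mt → Ω → ℝ) (a astar : Fin 2) : Ω → ℝ :=
  fun ω => ∑ m, if Mc astar ω = m then Yc a m ω else 0

/-!
Conditionally on `L = l`, exchangeability lets us condition on `A = a` for free, and then
`Y^{a,m}` and `M^{a*}` factor: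
`E[1{M^{a*}=m} Y^{a,m} | L=l] = P(M^{a*}=m | A=a, L=l) · E[Y^{a,m} | A=a, L=l]`.
In the first factor `A = a` may be traded for `A = a*`, since neither affects the law of `M^{a*}`.
In the second we may condition further on `M^a = m`, because `Y^{a,m}` is independent of `M^a` too.
Consistency then makes both factors observable, and summing over `m` and `l` gives the
cross-world mean `E[Y^{a,M^{a*}}]`; the direct effect is the difference of two such means.
-/

section FiniteConditioning

variable {Ω : Type} [Fintype Ω] {P : Ω → ℝ} {α β : Type*}

theorem cexp_congr {X Z : Ω → ℝ} {T : Ω → Prop} (h : ∀ ω, T ω → X ω = Z ω) :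
    cexp P X T = cexp P Z T := by
  unfold cexp
  congr 1
  refine Finset.sum_congr rfl fun ω _ => ?_
  split_ifs with hT
  · rw [h ω hT]
  · rfl

theorem cpr_eq_cexp_indicator (P : Ω → ℝ) (S T : Ω → Prop) :
    cpr P S T = cexp P (fun ω => if S ω then 1 else 0) T := by
  unfold cpr cexp
  congr 1
  refine Finset.sum_congr rfl fun ω _ => ?_
  by_cases hS : S ω <;> simp [hS]

theorem cpr_congr {S S' T : Ω → Prop} (h : ∀ ω, T ω → (S ω ↔ S' ω)) :
    cpr P S T = cpr P S' T := by
  simp only [cpr_eq_cexp_indicator]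
  exact cexp_congr fun ω hT => by simp only [h ω hT]

theorem cexp_ite_eq_cpr_mul_cexp {B T : Ω → Prop} (hB : cpr P B T ≠ 0) (X : Ω → ℝ) :
    cexp P (fun ω => if B ω then X ω else 0) T
      = cpr P B T * cexp P X (fun ω => B ω ∧ T ω) := by
  have hBT : pr P (fun ω => B ω ∧ T ω) ≠ 0 := (div_ne_zero_iff.mp hB).1
  unfold cexp cpr
  rw [mul_comm, div_mul_div_cancel₀ hBT]
  congr 1
  refine Finset.sum_congr rfl fun ω _ => ?_
  by_cases hω : B ω <;> simp [hω]

theorem cexp_ite_comp_eq_sum_image (P : Ω → ℝ) (X : Ω → α) (f : α → ℝ) (B T : Ω → Prop) :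
    cexp P (fun ω => if B ω then f (X ω) else 0) T
      = ∑ x ∈ Finset.univ.image X, f x * cpr P (fun ω => X ω = x ∧ B ω) T := by
  unfold cexp cpr pr
  simp only [← mul_div_assoc, ← Finset.sum_div, Finset.mul_sum]
  rw [Finset.sum_comm]
  congr 1
  refine Finset.sum_congr rfl fun ω _ => ?_
  rw [Finset.sum_eq_single_of_mem (X ω) (Finset.mem_image_of_mem X (Finset.mem_univ ω))
    fun x _ hx => by simp [hx.symm]]
  by_cases hB : B ω <;> by_cases hT : T ω <;> simp [hB, hT]

theorem cexp_comp_eq_sum_image (P : Ω → ℝ) (X : Ω → α) (f : α → ℝ) (T : Ω → Prop) :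
    cexp P (fun ω => f (X ω)) T
      = ∑ x ∈ Finset.univ.image X, f x * cpr P (fun ω => X ω = x) T := by
  simpa using cexp_ite_comp_eq_sum_image P X f (fun _ => True) T

theorem cexp_mul_pr (hP : ∀ ω, 0 ≤ P ω) (X : Ω → ℝ) (T : Ω → Prop) :
    cexp P X T * pr P T = ∑ ω, if T ω then X ω * P ω else 0 := by
  refine div_mul_cancel_of_imp fun hT => Finset.sum_eq_zero fun ω hω => ?_
  have hnull : (if T ω then P ω else 0) = 0 :=
    (Finset.sum_eq_zero_iff_of_nonneg fun ω _ => ite_nonneg (hP ω) le_rfl).mp hT ω hω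
  rw [← mul_ite_zero, hnull, mul_zero]

theorem expec_eq_sum_cexp_mul_pr [Fintype β] (hP : ∀ ω, 0 ≤ P ω) (X : Ω → ℝ) (V : Ω → β) :
    expec P X = ∑ v, cexp P X (fun ω => V ω = v) * pr P (fun ω => V ω = v) := by
  simp only [cexp_mul_pr hP, expec]
  rw [Finset.sum_comm]
  simp only [Finset.sum_ite_eq, Finset.mem_univ, if_true]

/-- The random variable `X` is conditionally independent of the event `B` given the event `T`.
It holds trivially when `T` is null, as `cpr` is then `0`. Independence of a random variable `Z`
is expressed by letting `B` range over the events `Z = z`. -/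
def IsCondIndep (P : Ω → ℝ) (X : Ω → α) (B T : Ω → Prop) : Prop :=
  ∀ x, cpr P (fun ω => X ω = x ∧ B ω) T = cpr P (fun ω => X ω = x) T * cpr P B T

namespace IsCondIndep

variable {X : Ω → α} {B T : Ω → Prop}

theorem cexp_ite (h : IsCondIndep P X B T) (f : α → ℝ) :
    cexp P (fun ω => if B ω then f (X ω) else 0) T
      = cpr P B T * cexp P (fun ω => f (X ω)) T := by
  rw [cexp_ite_comp_eq_sum_image, cexp_comp_eq_sum_image, Finset.mul_sum]
  refine Finset.sum_congr rfl fun x _ => ?_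
  rw [h x]
  ring

theorem comp (h : IsCondIndep P X B T) (g : α → β) :
    IsCondIndep P (fun ω => g (X ω)) B T := by
  intro y
  have hy := h.cexp_ite fun x => if g x = y then 1 else 0
  rw [← cpr_eq_cexp_indicator, mul_comm] at hy
  rw [← hy, cpr_eq_cexp_indicator]
  exact cexp_congr fun ω _ => by simp only [← ite_and, and_comm]

theorem cexp_and (h : IsCondIndep P X B T) (hB : cpr P B T ≠ 0) (f : α → ℝ) :
    cexp P (fun ω => f (X ω)) (fun ω => B ω ∧ T ω) = cexp P (fun ω => f (X ω)) T :=
  mul_left_cancel₀ hB <| (cexp_ite_eq_cpr_mul_cexp hB _).symm.trans (h.cexp_ite f)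

theorem cpr_and (h : IsCondIndep P X B T) (hB : cpr P B T ≠ 0) (x : α) :
    cpr P (fun ω => X ω = x) (fun ω => B ω ∧ T ω) = cpr P (fun ω => X ω = x) T := by
  simp only [cpr_eq_cexp_indicator P (fun ω => X ω = x)]
  exact h.cexp_and hB fun z => if z = x then 1 else 0

end IsCondIndep

end FiniteConditioning

/-- Consistency, positivity and cross-world exchangeability for counterfactual mediators
`Mc a = M^a` and outcomes `Yc a m = Y^{a,m}`, with treatment levels in an arbitrary type.
Exchangeability with the treatment is asked of each pair `(M^{a*}, Y^{a,m})` separately. -/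
structure CrossWorldModel {Ω : Type} {Lt Mt τ : Type*} [Fintype Ω] (P : Ω → ℝ) (Lv : Ω → Lt)
    (A : Ω → τ) (M : Ω → Mt) (Y : Ω → ℝ) (Mc : τ → Ω → Mt) (Yc : τ → Mt → Ω → ℝ) : Prop where
  consistency_mediator : ∀ a ω, A ω = a → Mc a ω = M ω
  consistency_outcome : ∀ a m ω, A ω = a → M ω = m → Yc a m ω = Y ω
  positivity : ∀ l, 0 < pr P (fun ω => Lv ω = l) → ∀ a m,
    0 < cpr P (fun ω => A ω = a) (fun ω => Lv ω = l) ∧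
    0 < cpr P (fun ω => M ω = m) (fun ω => A ω = a ∧ Lv ω = l)
  exchangeability_treatment : ∀ a' l a astar m,
    IsCondIndep P (fun ω => (Mc astar ω, Yc a m ω)) (fun ω => A ω = a') (fun ω => Lv ω = l)
  exchangeability_mediator : ∀ a astar m m' a' l,
    IsCondIndep P (Yc a m) (fun ω => Mc astar ω = m') (fun ω => A ω = a' ∧ Lv ω = l)

namespace CrossWorldModel

variable {Ω : Type} {Lt Mt τ : Type*} [Fintype Ω] {P : Ω → ℝ} {Lv : Ω → Lt} {A : Ω → τ}
  {M : Ω → Mt} {Y : Ω → ℝ} {Mc : τ → Ω → Mt} {Yc : τ → Mt → Ω → ℝ} {l : Lt}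

theorem cpr_counterfactual_mediator (h : CrossWorldModel P Lv A M Y Mc Yc)
    (hl : 0 < pr P (fun ω => Lv ω = l)) (a astar : τ) (m : Mt) :
    cpr P (fun ω => Mc astar ω = m) (fun ω => A ω = a ∧ Lv ω = l)
      = cpr P (fun ω => M ω = m) (fun ω => A ω = astar ∧ Lv ω = l) := by
  have drop_treatment (b : τ) :
      cpr P (fun ω => Mc astar ω = m) (fun ω => A ω = b ∧ Lv ω = l)
        = cpr P (fun ω => Mc astar ω = m) (fun ω => Lv ω = l) :=
    ((h.exchangeability_treatment b l a astar m).comp Prod.fst).cpr_and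
      (h.positivity l hl b m).1.ne' m
  rw [drop_treatment a, ← drop_treatment astar]
  exact cpr_congr fun ω hω => by rw [h.consistency_mediator astar ω hω.1]

theorem cexp_counterfactual_outcome (h : CrossWorldModel P Lv A M Y Mc Yc)
    (hl : 0 < pr P (fun ω => Lv ω = l)) (a : τ) (m : Mt) :
    cexp P (Yc a m) (fun ω => A ω = a ∧ Lv ω = l)
      = cexp P Y (fun ω => M ω = m ∧ A ω = a ∧ Lv ω = l) := by
  have hMc : cpr P (fun ω => Mc a ω = m) (fun ω => A ω = a ∧ Lv ω = l) ≠ 0 := by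
    rw [h.cpr_counterfactual_mediator hl]
    exact (h.positivity l hl a m).2.ne'
  have hevent : (fun ω => Mc a ω = m ∧ A ω = a ∧ Lv ω = l)
      = fun ω => M ω = m ∧ A ω = a ∧ Lv ω = l := by
    funext ω
    exact propext <| and_congr_left fun hω => by rw [h.consistency_mediator a ω hω.1]
  calc
    _ = cexp P (Yc a m) (fun ω => Mc a ω = m ∧ A ω = a ∧ Lv ω = l) :=
      ((h.exchangeability_mediator a a m m a l).cexp_and hMc id).symm
    _ = cexp P (Yc a m) (fun ω => M ω = m ∧ A ω = a ∧ Lv ω = l) := by rw [hevent]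
    _ = _ := cexp_congr fun ω hω => h.consistency_outcome a m ω hω.2.1 hω.1

theorem cexp_ite_counterfactual (h : CrossWorldModel P Lv A M Y Mc Yc)
    (hl : 0 < pr P (fun ω => Lv ω = l)) (a astar : τ) (m : Mt) :
    cexp P (fun ω => if Mc astar ω = m then Yc a m ω else 0) (fun ω => Lv ω = l)
      = cexp P Y (fun ω => M ω = m ∧ A ω = a ∧ Lv ω = l)
        * cpr P (fun ω => M ω = m) (fun ω => A ω = astar ∧ Lv ω = l) :=
  calc
    _ = cexp P (fun ω => if Mc astar ω = m then Yc a m ω else 0)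
          (fun ω => A ω = a ∧ Lv ω = l) :=
      ((h.exchangeability_treatment a l a astar m).cexp_and (h.positivity l hl a m).1.ne'
        fun v => if v.1 = m then v.2 else 0).symm
    _ = cpr P (fun ω => Mc astar ω = m) (fun ω => A ω = a ∧ Lv ω = l)
          * cexp P (Yc a m) (fun ω => A ω = a ∧ Lv ω = l) :=
      (h.exchangeability_mediator a astar m m a l).cexp_ite id
    _ = _ := by
      rw [h.cpr_counterfactual_mediator hl, h.cexp_counterfactual_outcome hl, mul_comm]

theorem expec_crossWorld [Fintype Lt] [Fintype Mt] (h : CrossWorldModel P Lv A M Y Mc Yc)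
    (hP : ∀ ω, 0 ≤ P ω) (a astar : τ) :
    expec P (fun ω => Yc a (Mc astar ω) ω)
      = ∑ m, ∑ l, cexp P Y (fun ω => M ω = m ∧ A ω = a ∧ Lv ω = l)
          * cpr P (fun ω => M ω = m) (fun ω => A ω = astar ∧ Lv ω = l)
          * pr P (fun ω => Lv ω = l) := by
  have split_mediator : expec P (fun ω => Yc a (Mc astar ω) ω)
      = ∑ m, expec P (fun ω => if Mc astar ω = m then Yc a m ω else 0) := by
    unfold expec
    rw [Finset.sum_comm]
    simp only [← Finset.sum_mul, Finset.sum_ite_eq, Finset.mem_univ, if_true]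
  rw [split_mediator]
  refine Finset.sum_congr rfl fun m _ => ?_
  rw [expec_eq_sum_cexp_mul_pr hP _ Lv]
  refine Finset.sum_congr rfl fun l _ => ?_
  have hl_nonneg : 0 ≤ pr P (fun ω => Lv ω = l) :=
    Finset.sum_nonneg fun ω _ => ite_nonneg (hP ω) le_rfl
  rcases hl_nonneg.eq_or_lt with hl_null | hl
  · rw [← hl_null, mul_zero, mul_zero]
  · rw [h.cexp_ite_counterfactual hl]

end CrossWorldModel

theorem natCf_eq {Ω Mt : Type} [Fintype Mt] (Mc : Fin 2 → Ω → Mt) (Yc : Fin 2 → Mt → Ω → ℝ)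
    (a astar : Fin 2) : natCf Mc Yc a astar = fun ω => Yc a (Mc astar ω) ω := by
  funext ω
  simp only [natCf, Finset.sum_ite_eq, Finset.mem_univ, if_true]

theorem isCondIndep_pair_of_isCondIndep_joint {Ω : Type} {Mt : Type*} [Fintype Ω] {P : Ω → ℝ}
    {Mc : Fin 2 → Ω → Mt} {Yc : Fin 2 → Mt → Ω → ℝ} {B T : Ω → Prop}
    (h : ∀ (m0 m1 : Mt) (yv : Fin 2 → Mt → ℝ),
      cpr P (fun ω => Mc 0 ω = m0 ∧ Mc 1 ω = m1 ∧ (∀ a m, Yc a m ω = yv a m) ∧ B ω) T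
        = cpr P (fun ω => Mc 0 ω = m0 ∧ Mc 1 ω = m1 ∧ (∀ a m, Yc a m ω = yv a m)) T
          * cpr P B T)
    (a astar : Fin 2) (m : Mt) : IsCondIndep P (fun ω => (Mc astar ω, Yc a m ω)) B T := by
  have hjoint : IsCondIndep P (fun ω => ((Mc · ω), (Yc · · ω))) B T := by
    rintro ⟨mv, yv⟩
    simpa only [Prod.mk.injEq, funext_iff, Fin.forall_fin_two (p := fun b => Mc b _ = mv b),
      and_assoc] using h (mv 0) (mv 1) yv
  exact hjoint.comp fun v => (v.1 astar, v.2 a m)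

theorem mediation_formula_identifies_nde_general {Ω : Type} {Lt Mt τ : Type*} [Fintype Ω]
    [Fintype Lt] [Fintype Mt] {P : Ω → ℝ} {Lv : Ω → Lt} {A : Ω → τ} {M : Ω → Mt} {Y : Ω → ℝ}
    {Mc : τ → Ω → Mt} {Yc : τ → Mt → Ω → ℝ} (hP : ∀ ω, 0 ≤ P ω)
    (h : CrossWorldModel P Lv A M Y Mc Yc) (a a' astar : τ) :
    expec P (fun ω => Yc a (Mc astar ω) ω) - expec P (fun ω => Yc a' (Mc astar ω) ω)
      = ∑ m, ∑ l,
        (cexp P Y (fun ω => M ω = m ∧ A ω = a ∧ Lv ω = l)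
          - cexp P Y (fun ω => M ω = m ∧ A ω = a' ∧ Lv ω = l))
        * cpr P (fun ω => M ω = m) (fun ω => A ω = astar ∧ Lv ω = l)
        * pr P (fun ω => Lv ω = l) := by
  simp only [h.expec_crossWorld hP, sub_mul, Finset.sum_sub_distrib]

/-- The mediation formula identifies the natural (pure) direct
effect: under consistency, positivity, and the cross-world exchangeability
assumptions, `E[Y^{1,M^0}] − E[Y^{0,M^0}] = Ψ(P)`. -/
theorem mediation_formula_identifies_nde
    (Ω Lt Mt : Type) [Fintype Ω] [Fintype Lt] [Fintype Mt]
    (P : Ω → ℝ) (hP0 : ∀ ω, 0 ≤ P ω) (hP1 : (∑ ω, P ω) = 1)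
    (Lv : Ω → Lt) (A : Ω → Fin 2) (M : Ω → Mt) (Y : Ω → ℝ)
    (Mc : Fin 2 → Ω → Mt) (Yc : Fin 2 → Mt → Ω → ℝ)
    -- consistency
    (hconsM : ∀ (a : Fin 2) (ω : Ω), A ω = a → Mc a ω = M ω)
    (hconsY : ∀ (a : Fin 2) (m : Mt) (ω : Ω), A ω = a → M ω = m → Yc a m ω = Y ω)
    -- positivity
    (hpos : ∀ l : Lt, 0 < pr P (fun ω => Lv ω = l) → ∀ (a : Fin 2) (m : Mt),
      0 < cpr P (fun ω => A ω = a) (fun ω => Lv ω = l) ∧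
      0 < cpr P (fun ω => M ω = m) (fun ω => A ω = a ∧ Lv ω = l))
    -- cross-world exchangeability, part 1:
    -- (M^0, M^1, (Y^{a,m})_{a,m}) ⟂ A given L
    (hexch1 : ∀ (m0 m1 : Mt) (yv : Fin 2 → Mt → ℝ) (l : Lt) (a' : Fin 2),
      cpr P (fun ω => Mc 0 ω = m0 ∧ Mc 1 ω = m1 ∧ (∀ a m, Yc a m ω = yv a m) ∧ A ω = a')
          (fun ω => Lv ω = l)
        = cpr P (fun ω => Mc 0 ω = m0 ∧ Mc 1 ω = m1 ∧ (∀ a m, Yc a m ω = yv a m))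
              (fun ω => Lv ω = l)
          * cpr P (fun ω => A ω = a') (fun ω => Lv ω = l))
    -- cross-world exchangeability, part 2: Y^{a,m} ⟂ M^{a*} given (A, L)
    (hexch2 : ∀ (a astar : Fin 2) (m : Mt) (y : ℝ) (mv : Mt) (a' : Fin 2) (l : Lt),
      cpr P (fun ω => Yc a m ω = y ∧ Mc astar ω = mv) (fun ω => A ω = a' ∧ Lv ω = l)
        = cpr P (fun ω => Yc a m ω = y) (fun ω => A ω = a' ∧ Lv ω = l)
            * cpr P (fun ω => Mc astar ω = mv) (fun ω => A ω = a' ∧ Lv ω = l)) :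
    expec P (natCf Mc Yc 1 0) - expec P (natCf Mc Yc 0 0)
      = medForm P Lv A M Y := by
  simp only [natCf_eq]
  exact mediation_formula_identifies_nde_general hP0 ⟨hconsM, hconsY, hpos,
    fun a' l => isCondIndep_pair_of_isCondIndep_joint (hexch1 · · · l a'),
    fun a astar m mv a' l y => hexch2 a astar m y mv a' l⟩ 1 0 0
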